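/- (Weighted divergence form of the temperature equation) Let d ≥ 1 and suppose P ∈ C¹((0,∞)) and U, Θ ∈ C²((0,∞)) solve the backward self-similar ODE system, and assume s ↦ P(s)(s/2 + U(s)) is locally integrable on [0,∞). Define Z(r) := (C_V/κ)∫₀^r P(s)(s/2 + U(s)) ds. Then for all r > 0: −κ r^{1−d} ( r^{d−1} e^{−Z(r)} Θ'(r) )' + C_V P Θ e^{−Z(r)} + R P Θ (U' + ((d−1)/r)U) e^{−Z(r)} = [ 2μ((U')² + ((d−1)/r²)U²) + λ(U' + ((d−1)/r)U)² ] e^{−Z(r)}. -/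

import Mathlib

open Real Set Filter MeasureTheory

/-- The backward self-similar ODE system for the compressible Navier-Stokes
equations, for scalar profiles `P, U, Θ : ℝ → ℝ` considered on `(0, ∞)`. -/
def BackwardODE (d : ℕ) (R CV κ μ lam : ℝ) (P U Θ : ℝ → ℝ) : Prop :=
  ∀ r : ℝ, 0 < r →
    ((1/2) * r * deriv P r + deriv P r * U r
        + P r * (deriv U r + ((d : ℝ) - 1) / r * U r) = 0)
    ∧ ((1/2) * (P r * U r)
        + (1/2) * r * deriv (fun s => P s * U s) r
        + deriv (fun s => P s * U s ^ 2) r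
        + ((d : ℝ) - 1) / r * (P r * U r ^ 2)
        + R * deriv (fun s => P s * Θ s) r
        = (2 * μ + lam) *
            (deriv (deriv U) r + ((d : ℝ) - 1) / r * deriv U r
              - ((d : ℝ) - 1) / r ^ 2 * U r))
    ∧ (P r * (U r ^ 2 / 2 + CV * Θ r)
        + (1/2) * r * deriv (fun s => P s * (U s ^ 2 / 2 + CV * Θ s)) r
        + deriv (fun s => U s * P s * (U s ^ 2 / 2 + CV * Θ s)
            + R * U s * P s * Θ s) r
        + ((d : ℝ) - 1) / r *
            (U r * P r * (U r ^ 2 / 2 + CV * Θ r) + R * U r * P r * Θ r)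
        - κ * (deriv (deriv Θ) r + ((d : ℝ) - 1) / r * deriv Θ r)
        = 2 * μ * ((deriv U r) ^ 2 + ((d : ℝ) - 1) / r ^ 2 * U r ^ 2)
          + lam * (deriv U r + ((d : ℝ) - 1) / r * U r) ^ 2
          + (2 * μ + lam) *
              (deriv (deriv U) r + ((d : ℝ) - 1) / r * deriv U r
                - ((d : ℝ) - 1) / r ^ 2 * U r) * U r)

/-!
The continuity equation turns a conservative transport term into a convective one:
`(r / 2) (P f)' + div (P f U) = P (r / 2 + U) f'`. Applied to `f = U` and to the total energy
`f = U² / 2 + C_V Θ`, it makes `U` times the momentum equation cancel the kinetic part of the energy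
equation, together with the viscous work `(2μ + λ) (ΔU) U`. What is left is
`C_V P Θ + C_V P (r / 2 + U) Θ' + R P Θ div U - κ ΔΘ = dissipation`. The drift term has coefficient
`C_V P (r / 2 + U) = κ Z'`, so `e^{-Z}` is its integrating factor:
`-κ e^{-Z} (ΔΘ - Z' Θ') = -κ div (e^{-Z} Θ')`.
-/

section RadialCalculus

/-- The divergence of the radial vector field `x ↦ f |x| x / |x|` at radius `r`, in dimension `n`.
The dimension is real, since only the weight `r ^ (n - 1)` enters. -/
noncomputable def radialDiv (n : ℝ) (f : ℝ → ℝ) (r : ℝ) : ℝ :=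
  deriv f r + (n - 1) / r * f r

/-- The Laplacian of the radial function `x ↦ f |x|` at radius `r`, in dimension `n`: the heat
diffusion term of the energy equation. -/
noncomputable def radialLaplacian (n : ℝ) (f : ℝ → ℝ) (r : ℝ) : ℝ :=
  radialDiv n (deriv f) r

/-- The radial component of the Laplacian of the vector field `x ↦ f |x| x / |x|` at radius `r`,
in dimension `n`; times `2 * μ + lam` it is the viscous force in the momentum equation. -/
noncomputable def radialVectorLaplacian (n : ℝ) (f : ℝ → ℝ) (r : ℝ) : ℝ :=
  deriv (deriv f) r + (n - 1) / r * deriv f r - (n - 1) / r ^ 2 * f r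

/-- The heat produced by viscous friction, per unit volume, in the flow `x ↦ U |x| x / |x|` at
radius `r`, with viscosity coefficients `μ` and `lam`: the source of the temperature equation. -/
noncomputable def viscousDissipation (n μ lam : ℝ) (U : ℝ → ℝ) (r : ℝ) : ℝ :=
  2 * μ * (deriv U r ^ 2 + (n - 1) / r ^ 2 * U r ^ 2) + lam * radialDiv n U r ^ 2

variable {n r : ℝ} {f g : ℝ → ℝ}

theorem radialDiv_add (hf : DifferentiableAt ℝ f r) (hg : DifferentiableAt ℝ g r) :
    radialDiv n (fun s => f s + g s) r = radialDiv n f r + radialDiv n g r := by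
  simp only [radialDiv, deriv_fun_add hf hg]
  ring

theorem radialDiv_mul (hf : DifferentiableAt ℝ f r) (hg : DifferentiableAt ℝ g r) :
    radialDiv n (fun s => f s * g s) r = f r * radialDiv n g r + deriv f r * g r := by
  simp only [radialDiv, deriv_fun_mul hf hg]
  ring

theorem radialDiv_const_mul (c : ℝ) (hf : DifferentiableAt ℝ f r) :
    radialDiv n (fun s => c * f s) r = c * radialDiv n f r := by
  simp only [radialDiv, deriv_const_mul c hf]
  ring

theorem rpow_mul_deriv_rpow_mul (hr : 0 < r) (hf : DifferentiableAt ℝ f r) :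
    r ^ (1 - n) * deriv (fun s => s ^ (n - 1) * f s) r = radialDiv n f r := by
  have hpow : HasDerivAt (fun s : ℝ => s ^ (n - 1)) ((n - 1) * r ^ (n - 1 - 1)) r :=
    Real.hasDerivAt_rpow_const (Or.inl hr.ne')
  have hcancel : r ^ (1 - n) * r ^ (n - 1) = 1 := by
    rw [← Real.rpow_add hr, sub_add_sub_cancel', sub_self, Real.rpow_zero]
  rw [(hpow.fun_mul hf.hasDerivAt).deriv, Real.rpow_sub_one hr.ne', radialDiv]
  linear_combination ((n - 1) / r * f r + deriv f r) * hcancel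

theorem rpow_mul_deriv_rpow_mul_exp_neg_mul {Z : ℝ → ℝ} {Z' : ℝ} (hr : 0 < r)
    (hZ : HasDerivAt Z Z' r) (hf : DifferentiableAt ℝ f r) :
    r ^ (1 - n) * deriv (fun s => s ^ (n - 1) * Real.exp (-Z s) * f s) r
      = Real.exp (-Z r) * (radialDiv n f r - Z' * f r) := by
  have hexp := hZ.fun_neg.exp
  simp only [mul_assoc]
  rw [rpow_mul_deriv_rpow_mul hr (hexp.differentiableAt.fun_mul hf),
    radialDiv_mul hexp.differentiableAt hf, hexp.deriv]
  ring

theorem conservative_transport_eq_convective {P U : ℝ → ℝ} (hP : DifferentiableAt ℝ P r)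
    (hU : DifferentiableAt ℝ U r) (hf : DifferentiableAt ℝ f r)
    (hmass : r / 2 * deriv P r + radialDiv n (fun s => P s * U s) r = 0) :
    r / 2 * deriv (fun s => P s * f s) r + radialDiv n (fun s => f s * (P s * U s)) r
      = P r * (r / 2 + U r) * deriv f r := by
  rw [deriv_fun_mul hP hf, radialDiv_mul hf (hP.fun_mul hU)]
  linear_combination f r * hmass

end RadialCalculus

theorem hasDerivAt_integral_of_continuousOn_Ioi {f : ℝ → ℝ} {a x : ℝ} (hx : a < x)
    (hf : ContinuousOn f (Ioi a)) (hint : IntervalIntegrable f volume a x) :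
    HasDerivAt (fun t => ∫ s in a..t, f s) (f x) x :=
  intervalIntegral.integral_hasDerivAt_right hint
    (hf.stronglyMeasurableAtFilter isOpen_Ioi x hx) (hf.continuousAt (Ioi_mem_nhds hx))

namespace BackwardODE

variable {d : ℕ} {R CV κ μ lam : ℝ} {P U Θ : ℝ → ℝ} {r : ℝ}

theorem mass_eq (hODE : BackwardODE d R CV κ μ lam P U Θ) (hr : 0 < r)
    (hP : DifferentiableAt ℝ P r) (hU : DifferentiableAt ℝ U r) :
    r / 2 * deriv P r + radialDiv d (fun s => P s * U s) r = 0 := by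
  rw [radialDiv_mul hP hU, radialDiv]
  linear_combination (hODE r hr).1

theorem convective_momentum_eq (hODE : BackwardODE d R CV κ μ lam P U Θ) (hr : 0 < r)
    (hP : DifferentiableAt ℝ P r) (hU : DifferentiableAt ℝ U r) :
    1 / 2 * (P r * U r) + P r * (r / 2 + U r) * deriv U r + R * deriv (fun s => P s * Θ s) r
      = (2 * μ + lam) * radialVectorLaplacian d U r := by
  have htransport := conservative_transport_eq_convective hP hU hU (hODE.mass_eq hr hP hU)
  have hflux : (fun s => U s * (P s * U s)) = fun s => P s * U s ^ 2 := by
    ext s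
    ring
  rw [hflux, radialDiv] at htransport
  rw [radialVectorLaplacian]
  linear_combination (hODE r hr).2.1 - htransport

theorem convective_energy_eq (hODE : BackwardODE d R CV κ μ lam P U Θ) (hr : 0 < r)
    (hP : DifferentiableAt ℝ P r) (hU : DifferentiableAt ℝ U r) (hΘ : DifferentiableAt ℝ Θ r) :
    P r * (U r ^ 2 / 2 + CV * Θ r)
        + P r * (r / 2 + U r) * (U r * deriv U r + CV * deriv Θ r)
        + R * radialDiv d (fun s => U s * (P s * Θ s)) r - κ * radialLaplacian d Θ r
      = viscousDissipation d μ lam U r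
        + (2 * μ + lam) * radialVectorLaplacian d U r * U r := by
  have henergy : HasDerivAt (fun s => U s ^ 2 / 2 + CV * Θ s)
      (U r * deriv U r + CV * deriv Θ r) r :=
    (((hU.hasDerivAt.fun_pow 2).div_const 2).fun_add (hΘ.hasDerivAt.const_mul CV)).congr_deriv
      (by push_cast; ring)
  have hE := henergy.differentiableAt
  have htransport := conservative_transport_eq_convective hP hU hE (hODE.mass_eq hr hP hU)
  have hflux : radialDiv d
      (fun s => U s * P s * (U s ^ 2 / 2 + CV * Θ s) + R * U s * P s * Θ s) r
      = radialDiv d (fun s => (U s ^ 2 / 2 + CV * Θ s) * (P s * U s)) r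
        + R * radialDiv d (fun s => U s * (P s * Θ s)) r := by
    have hpressure := hU.fun_mul (hP.fun_mul hΘ)
    rw [← radialDiv_const_mul R hpressure,
      ← radialDiv_add (hE.fun_mul (hP.fun_mul hU)) (hpressure.const_mul R)]
    congr 1
    ext s
    ring
  rw [henergy.deriv] at htransport
  simp only [radialLaplacian, viscousDissipation, radialVectorLaplacian, radialDiv]
    at htransport hflux ⊢
  linear_combination (hODE r hr).2.2 - htransport - hflux

theorem temperature_eq (hODE : BackwardODE d R CV κ μ lam P U Θ) (hr : 0 < r)
    (hP : DifferentiableAt ℝ P r) (hU : DifferentiableAt ℝ U r) (hΘ : DifferentiableAt ℝ Θ r) :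
    CV * P r * Θ r + CV * (P r * (r / 2 + U r)) * deriv Θ r
        + R * P r * Θ r * radialDiv d U r - κ * radialLaplacian d Θ r
      = viscousDissipation d μ lam U r := by
  have henergy := hODE.convective_energy_eq hr hP hU hΘ
  have hmomentum := hODE.convective_momentum_eq hr hP hU
  have hwork : radialDiv d (fun s => U s * (P s * Θ s)) r
      = P r * Θ r * radialDiv d U r + U r * deriv (fun s => P s * Θ s) r := by
    rw [radialDiv_mul hU (hP.fun_mul hΘ), radialDiv, radialDiv]
    ring
  linear_combination henergy - U r * hmomentum - R * hwork

end BackwardODE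

theorem temperature_weighted_divergence_form_general {d : ℕ} {R CV κ μ lam : ℝ} (hκ : κ ≠ 0)
    {P U Θ Z : ℝ → ℝ} (hODE : BackwardODE d R CV κ μ lam P U Θ) {r : ℝ} (hr : 0 < r)
    (hP : DifferentiableAt ℝ P r) (hU : DifferentiableAt ℝ U r) (hΘ : DifferentiableAt ℝ Θ r)
    (hΘ' : DifferentiableAt ℝ (deriv Θ) r)
    (hZ : HasDerivAt Z (CV / κ * (P r * (r / 2 + U r))) r) :
    -κ * r ^ (1 - (d : ℝ)) *
          deriv (fun s => s ^ ((d : ℝ) - 1) * Real.exp (-Z s) * deriv Θ s) r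
        + CV * P r * Θ r * Real.exp (-Z r)
        + R * P r * Θ r * radialDiv d U r * Real.exp (-Z r)
      = viscousDissipation d μ lam U r * Real.exp (-Z r) := by
  have htemperature := hODE.temperature_eq hr hP hU hΘ
  have hdiv := rpow_mul_deriv_rpow_mul_exp_neg_mul (n := d) hr hZ hΘ'
  have hdrift : κ * (CV / κ) = CV := mul_div_cancel₀ CV hκ
  rw [radialLaplacian] at htemperature
  linear_combination Real.exp (-Z r) * htemperature - κ * hdiv
    + Real.exp (-Z r) * (P r * (r / 2 + U r)) * deriv Θ r * hdrift

/-- (Weighted divergence form of the temperature equation) -/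
theorem temperature_weighted_divergence_form
    (d : ℕ) (hd : 1 ≤ d) (R CV κ μ lam : ℝ)
    (hR : 0 < R) (hCV : 0 < CV) (hκ : 0 < κ) (hμ : 0 < μ)
    (hlam : 0 ≤ 2 * μ + d * lam)
    (P U Θ : ℝ → ℝ)
    (hP : ContDiffOn ℝ 1 P (Ioi 0))
    (hU : ContDiffOn ℝ 2 U (Ioi 0))
    (hΘ : ContDiffOn ℝ 2 Θ (Ioi 0))
    (hODE : BackwardODE d R CV κ μ lam P U Θ)
    (hloc : ∀ r : ℝ, 0 < r →
      IntervalIntegrable (fun s => P s * (s / 2 + U s)) volume 0 r)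
    (Z : ℝ → ℝ)
    (hZ : ∀ r : ℝ, Z r = CV / κ * ∫ s in (0 : ℝ)..r, P s * (s / 2 + U s)) :
    ∀ r : ℝ, 0 < r →
      -κ * r ^ (1 - (d : ℝ)) *
          deriv (fun s => s ^ ((d : ℝ) - 1) * Real.exp (-Z s) * deriv Θ s) r
        + CV * P r * Θ r * Real.exp (-Z r)
        + R * P r * Θ r * (deriv U r + ((d : ℝ) - 1) / r * U r) * Real.exp (-Z r)
      = (2 * μ * ((deriv U r) ^ 2 + ((d : ℝ) - 1) / r ^ 2 * U r ^ 2)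
          + lam * (deriv U r + ((d : ℝ) - 1) / r * U r) ^ 2) * Real.exp (-Z r) := by
  intro r hr
  have hmem : Ioi (0 : ℝ) ∈ nhds r := Ioi_mem_nhds hr
  have hcont : ContinuousOn (fun s => P s * (s / 2 + U s)) (Ioi 0) :=
    hP.continuousOn.mul ((continuousOn_id.div_const 2).add hU.continuousOn)
  have hΘ' : ContDiffOn ℝ 1 (deriv Θ) (Ioi 0) :=
    hΘ.deriv_of_isOpen isOpen_Ioi one_add_one_eq_two.le
  have hZ' : HasDerivAt Z (CV / κ * (P r * (r / 2 + U r))) r := by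
    rw [funext hZ]
    exact (hasDerivAt_integral_of_continuousOn_Ioi hr hcont (hloc r hr)).const_mul _
  exact temperature_weighted_divergence_form_general hκ.ne' hODE hr
    ((hP.contDiffAt hmem).differentiableAt one_ne_zero)
    ((hU.contDiffAt hmem).differentiableAt two_ne_zero)
    ((hΘ.contDiffAt hmem).differentiableAt two_ne_zero)
    ((hΘ'.contDiffAt hmem).differentiableAt one_ne_zero) hZ'
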